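/- arXiv:1610.02290 — 6 statements merged into one kernel-verified Lean document; each statement's English description precedes it below -/
import Mathlib

section
/- Let (A, μ, α, β) be a BiHom-associative superalgebra over a field k whose structure maps α and β are bijective. Define on homogeneous elements the supercommutator [x, y] = xy − (−1)^{|x||y|} (α⁻¹(β(y)))(α(β⁻¹(x))), extended bilinearly to all of A. Then (A, [·,·], α, β) is a BiHom-Lie superalgebra. (Theorem 2.6) -/
/-- The supercommutator of a BiHom-(associative) superalgebra with bijective structure
maps `α`, `β`, defined on elements of parities `i`, `j` by
`[x, y] = x·y − (−1)^{|x||y|} (α⁻¹(β(y)))·(α(β⁻¹(x)))`. -/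
noncomputable def superComm {K : Type*} [Field K] {A : Type*} [AddCommGroup A] [Module K A]
    (μ : A →ₗ[K] A →ₗ[K] A) (α β : A ≃ₗ[K] A) (i j : ZMod 2) (x y : A) : A :=
  μ x y - ((-1 : K) ^ (i.val * j.val)) • μ (α.symm (β y)) (α (β.symm x))

theorem even_symm_mem {K : Type*} [Field K] {A : Type*} [AddCommGroup A] [Module K A]
    (𝒜 : ZMod 2 → Submodule K A) [DirectSum.Decomposition 𝒜] (α : A ≃ₗ[K] A)
    (hαe : ∀ (i : ZMod 2), ∀ x ∈ 𝒜 i, α x ∈ 𝒜 i) (i : ZMod 2) (x : A) (hx : x ∈ 𝒜 i) :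
    α.symm x ∈ 𝒜 i := by
  have key : ∀ u : A, (DirectSum.decompose 𝒜 (α u) i : A) = α (DirectSum.decompose 𝒜 u i) := by
    intro u
    induction u using DirectSum.Decomposition.inductionOn 𝒜 with
    | zero => simp
    | @homogeneous j m =>
      by_cases h : j = i
      · subst h
        rw [DirectSum.decompose_of_mem_same 𝒜 (hαe _ _ m.2),
          DirectSum.decompose_of_mem_same 𝒜 m.2]
      · rw [DirectSum.decompose_of_mem_ne 𝒜 (hαe _ _ m.2) h,
          DirectSum.decompose_of_mem_ne 𝒜 m.2 h, map_zero]
    | add a b ha hb => simp [DirectSum.decompose_add, ha, hb]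
  have h := key (α.symm x)
  rw [LinearEquiv.apply_symm_apply, DirectSum.decompose_of_mem_same 𝒜 hx] at h
  have h2 : α.symm x = (DirectSum.decompose 𝒜 (α.symm x) i : A) := by
    rw [LinearEquiv.symm_apply_eq]; exact h
  rw [h2]
  exact SetLike.coe_mem _

/-- **Theorem 2.6.** If `(A, μ, α, β)` is a BiHom-associative superalgebra with bijective
structure maps `α`, `β`, then `A` with the supercommutator bracket is a BiHom-Lie
superalgebra: the bracket is even, compatible with `α` and `β`, BiHom-skew-supersymmetric
and satisfies the BiHom-superJacobi identity. -/
theorem bihomAssociative_gives_bihomLie_superalgebra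
    (K : Type*) [Field K] (A : Type*) [AddCommGroup A] [Module K A]
    (𝒜 : ZMod 2 → Submodule K A) [DirectSum.Decomposition 𝒜]
    (μ : A →ₗ[K] A →ₗ[K] A) (α β : A ≃ₗ[K] A)
    (hμ : ∀ (i j : ZMod 2), ∀ x ∈ 𝒜 i, ∀ y ∈ 𝒜 j, μ x y ∈ 𝒜 (i + j))
    (hαe : ∀ (i : ZMod 2), ∀ x ∈ 𝒜 i, α x ∈ 𝒜 i)
    (hβe : ∀ (i : ZMod 2), ∀ x ∈ 𝒜 i, β x ∈ 𝒜 i)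
    (hco : ∀ a : A, α (β a) = β (α a))
    (hαm : ∀ a b : A, α (μ a b) = μ (α a) (α b))
    (hβm : ∀ a b : A, β (μ a b) = μ (β a) (β b))
    (hass : ∀ a b c : A, μ (α a) (μ b c) = μ (μ a b) (β c)) :
    (∀ (i j : ZMod 2), ∀ x ∈ 𝒜 i, ∀ y ∈ 𝒜 j, superComm μ α β i j x y ∈ 𝒜 (i + j)) ∧
    (∀ (i j : ZMod 2), ∀ x ∈ 𝒜 i, ∀ y ∈ 𝒜 j,
      α (superComm μ α β i j x y) = superComm μ α β i j (α x) (α y)) ∧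
    (∀ (i j : ZMod 2), ∀ x ∈ 𝒜 i, ∀ y ∈ 𝒜 j,
      β (superComm μ α β i j x y) = superComm μ α β i j (β x) (β y)) ∧
    (∀ (i j : ZMod 2), ∀ x ∈ 𝒜 i, ∀ y ∈ 𝒜 j,
      superComm μ α β i j (β x) (α y)
        = -(((-1 : K) ^ (i.val * j.val)) • superComm μ α β j i (β y) (α x))) ∧
    (∀ (i j l : ZMod 2), ∀ x ∈ 𝒜 i, ∀ y ∈ 𝒜 j, ∀ z ∈ 𝒜 l,
      ((-1 : K) ^ (i.val * l.val)) •
          superComm μ α β i (j + l) (β (β x)) (superComm μ α β j l (β y) (α z))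
        + ((-1 : K) ^ (j.val * i.val)) •
          superComm μ α β j (l + i) (β (β y)) (superComm μ α β l i (β z) (α x))
        + ((-1 : K) ^ (l.val * j.val)) •
          superComm μ α β l (i + j) (β (β z)) (superComm μ α β i j (β x) (α y)) = 0) := by
  have hsa := even_symm_mem 𝒜 α hαe
  have hsb := even_symm_mem 𝒜 β hβe
  have c1 : ∀ a, α.symm (β a) = β (α.symm a) := fun a => by
    rw [LinearEquiv.symm_apply_eq, hco, LinearEquiv.apply_symm_apply]
  have c2 : ∀ a, β.symm (α a) = α (β.symm a) := fun a => by
    rw [LinearEquiv.symm_apply_eq, ← hco, LinearEquiv.apply_symm_apply]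
  have m1 : ∀ a b, α.symm (μ a b) = μ (α.symm a) (α.symm b) := fun a b => by
    rw [LinearEquiv.symm_apply_eq, hαm]; simp
  refine ⟨?_, ?_, ?_, ?_, ?_⟩
  · intro i j x hx y hy
    refine Submodule.sub_mem _ (hμ _ _ _ hx _ hy) (Submodule.smul_mem _ _ ?_)
    rw [add_comm i j]
    exact hμ _ _ _ (hsa _ _ (hβe _ _ hy)) _ (hαe _ _ (hsb _ _ hx))
  · intro i j x hx y hy
    simp [superComm, hαm, hco, c1, c2]
  · intro i j x hx y hy
    simp [superComm, hβm, ← hco, c1]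
  · intro i j x hx y hy
    have e : ((-1 : K) ^ (i.val * j.val)) * ((-1 : K) ^ (i.val * j.val)) = 1 := by
      rw [← mul_pow]; simp
    simp only [superComm, c1, c2, LinearEquiv.symm_apply_apply, smul_sub, smul_smul,
      mul_comm j.val i.val, e, one_smul]
    abel
  · have inner : ∀ (j l : ZMod 2) (y z : A), superComm μ α β j l (β y) (α z)
        = μ (β y) (α z) - ((-1 : K) ^ (j.val * l.val)) • μ (β z) (α y) := by
      intro j l y z
      simp [superComm, c1]
    have T : ∀ x y z : A, μ (α.symm (β (μ (β y) (α z)))) (α (β.symm (β (β x))))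
        = μ (β (β y)) (μ (β z) (α x)) := by
      intro x y z
      have := hass (α.symm (β (β y))) (β z) (α x)
      rw [LinearEquiv.apply_symm_apply] at this
      rw [this, hβm, m1, LinearEquiv.symm_apply_apply, hco, ← hco z,
        LinearEquiv.symm_apply_apply]
    have outer : ∀ (i j l : ZMod 2) (x y z : A),
        superComm μ α β i (j + l) (β (β x)) (superComm μ α β j l (β y) (α z))
        = μ (β (β x)) (μ (β y) (α z))
          - ((-1 : K) ^ (j.val * l.val)) • μ (β (β x)) (μ (β z) (α y))
          - ((-1 : K) ^ (i.val * (j + l).val)) • (μ (β (β y)) (μ (β z) (α x))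
          - ((-1 : K) ^ (j.val * l.val)) • μ (β (β z)) (μ (β y) (α x))) := by
      intro i j l x y z
      rw [inner]
      simp only [superComm, map_sub, map_smul, LinearMap.sub_apply, LinearMap.smul_apply, T]
    intro i j l x hx y hy z hz
    rw [outer, outer, outer]
    have sgn : ∀ i j l : ZMod 2, (-1 : K) ^ (i.val * (j + l).val)
        = (-1 : K) ^ (i.val * j.val) * (-1 : K) ^ (i.val * l.val) := by
      intro i j l
      rw [← pow_add, ← mul_add, ZMod.val_add, mul_comm, pow_mul, ← neg_one_pow_eq_pow_mod_two,
        ← pow_mul, mul_comm]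
    have sq : ∀ i j : ZMod 2, (-1 : K) ^ (i.val * j.val) * (-1 : K) ^ (i.val * j.val) = 1 := by
      intro i j
      rw [← mul_pow]; simp
    rw [sgn, sgn, sgn, mul_comm l.val i.val, mul_comm j.val i.val, mul_comm l.val j.val]
    have h1 := sq i j
    have h2 := sq i l
    have h3 := sq j l
    generalize (-1 : K) ^ (i.val * j.val) = a at *
    generalize (-1 : K) ^ (i.val * l.val) = b at *
    generalize (-1 : K) ^ (j.val * l.val) = c at *
    have ha : a = 1 ∨ a = -1 := mul_self_eq_one_iff.mp h1
    have hb : b = 1 ∨ b = -1 := mul_self_eq_one_iff.mp h2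
    have hc : c = 1 ∨ c = -1 := mul_self_eq_one_iff.mp h3
    clear h1 h2 h3 sgn sq
    rcases ha with rfl | rfl <;> rcases hb with rfl | rfl <;> rcases hc with rfl | rfl <;>
      module
end

section
/- Let (L, [·,·]) be a Lie superalgebra over a field k, and let α, β : L → L be two even, mutually commuting algebra homomorphisms (α∘β = β∘α, α[x,y] = [α(x), α(y)], β[x,y] = [β(x), β(y)]). Define a new bracket by [x, y]_{α,β} = [α(x), β(y)]. Then (L, [·,·]_{α,β}, α, β) is a BiHom-Lie superalgebra. (Theorem 2.7) -/
/-- **Theorem 2.7 (Yau twist).** Let `(L, [·,·])` be a Lie superalgebra and `α`, `β` two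
even, mutually commuting algebra homomorphisms of `L`.  Then `L` with the new bracket
`[x, y]_{α,β} = [α(x), β(y)]` and structure maps `α`, `β` is a BiHom-Lie superalgebra:
the new bracket is even, compatible with `α` and `β`, BiHom-skew-supersymmetric and
satisfies the BiHom-superJacobi identity. -/
theorem yauTwist_lieSuper_gives_bihomLie_superalgebra
    (K : Type*) [Field K] (L : Type*) [AddCommGroup L] [Module K L]
    (𝒜 : ZMod 2 → Submodule K L) [DirectSum.Decomposition 𝒜]
    (b : L →ₗ[K] L →ₗ[K] L) (α β : L →ₗ[K] L)
    (hb : ∀ (i j : ZMod 2), ∀ x ∈ 𝒜 i, ∀ y ∈ 𝒜 j, b x y ∈ 𝒜 (i + j))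
    (hαe : ∀ (i : ZMod 2), ∀ x ∈ 𝒜 i, α x ∈ 𝒜 i)
    (hβe : ∀ (i : ZMod 2), ∀ x ∈ 𝒜 i, β x ∈ 𝒜 i)
    (hskew : ∀ (i j : ZMod 2), ∀ x ∈ 𝒜 i, ∀ y ∈ 𝒜 j,
      b x y = -(((-1 : K) ^ (i.val * j.val)) • b y x))
    (hjac : ∀ (i j l : ZMod 2), ∀ x ∈ 𝒜 i, ∀ y ∈ 𝒜 j, ∀ z ∈ 𝒜 l,
      ((-1 : K) ^ (i.val * l.val)) • b x (b y z)
        + ((-1 : K) ^ (j.val * i.val)) • b y (b z x)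
        + ((-1 : K) ^ (l.val * j.val)) • b z (b x y) = 0)
    (hco : ∀ a : L, α (β a) = β (α a))
    (hαh : ∀ x y : L, α (b x y) = b (α x) (α y))
    (hβh : ∀ x y : L, β (b x y) = b (β x) (β y)) :
    -- the twisted bracket `[x, y]_{α,β} = b (α x) (β y)` makes `L` a BiHom-Lie superalgebra
    (∀ (i j : ZMod 2), ∀ x ∈ 𝒜 i, ∀ y ∈ 𝒜 j, b (α x) (β y) ∈ 𝒜 (i + j)) ∧
    (∀ x y : L, α (b (α x) (β y)) = b (α (α x)) (β (α y))) ∧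
    (∀ x y : L, β (b (α x) (β y)) = b (α (β x)) (β (β y))) ∧
    (∀ (i j : ZMod 2), ∀ x ∈ 𝒜 i, ∀ y ∈ 𝒜 j,
      b (α (β x)) (β (α y)) = -(((-1 : K) ^ (i.val * j.val)) • b (α (β y)) (β (α x)))) ∧
    (∀ (i j l : ZMod 2), ∀ x ∈ 𝒜 i, ∀ y ∈ 𝒜 j, ∀ z ∈ 𝒜 l,
      ((-1 : K) ^ (i.val * l.val)) •
          b (α (β (β x))) (β (b (α (β y)) (β (α z))))
        + ((-1 : K) ^ (j.val * i.val)) •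
          b (α (β (β y))) (β (b (α (β z)) (β (α x))))
        + ((-1 : K) ^ (l.val * j.val)) •
          b (α (β (β z))) (β (b (α (β x)) (β (α y)))) = 0) := by
  refine ⟨?_, ?_, ?_, ?_, ?_⟩
  · intro i j x hx y hy
    exact hb i j _ (hαe i x hx) _ (hβe j y hy)
  · intro x y
    rw [hαh, hco y]
  · intro x y
    rw [hβh, hco x]
  · intro i j x hx y hy
    simp only [hco]
    exact hskew i j _ (hβe i _ (hαe i x hx)) _ (hβe j _ (hαe j y hy))
  · intro i j l x hx y hy z hz
    simp only [hβh, hco]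
    exact hjac i j l _ (hβe i _ (hβe i _ (hαe i x hx))) _ (hβe j _ (hβe j _ (hαe j y hy)))
      _ (hβe l _ (hβe l _ (hαe l z hz)))
end

section
/- Every BiHom-associative superalgebra (A, μ, α, β) over a field k with α and β bijective is a BiHom-Lie admissible superalgebra; that is, the supercommutator bracket [x, y] = xy − (−1)^{|x||y|} (α⁻¹(β(y)))(α(β⁻¹(x))) satisfies the BiHom-superJacobi identity. (Remark 3.2) -/
/-- **Remark 3.2.** Every BiHom-associative superalgebra with bijective structure maps
`α`, `β` is BiHom-Lie admissible: its supercommutator bracket satisfies the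
BiHom-superJacobi identity on homogeneous elements. -/
theorem bihomAssociative_is_bihomLie_admissible
    (K : Type*) [Field K] (A : Type*) [AddCommGroup A] [Module K A]
    (𝒜 : ZMod 2 → Submodule K A) [DirectSum.Decomposition 𝒜]
    (μ : A →ₗ[K] A →ₗ[K] A) (α β : A ≃ₗ[K] A)
    (hμ : ∀ (i j : ZMod 2), ∀ x ∈ 𝒜 i, ∀ y ∈ 𝒜 j, μ x y ∈ 𝒜 (i + j))
    (hαe : ∀ (i : ZMod 2), ∀ x ∈ 𝒜 i, α x ∈ 𝒜 i)
    (hβe : ∀ (i : ZMod 2), ∀ x ∈ 𝒜 i, β x ∈ 𝒜 i)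
    (hco : ∀ a : A, α (β a) = β (α a))
    (hαm : ∀ a b : A, α (μ a b) = μ (α a) (α b))
    (hβm : ∀ a b : A, β (μ a b) = μ (β a) (β b))
    (hass : ∀ a b c : A, μ (α a) (μ b c) = μ (μ a b) (β c)) :
    ∀ (i j l : ZMod 2), ∀ x ∈ 𝒜 i, ∀ y ∈ 𝒜 j, ∀ z ∈ 𝒜 l,
      ((-1 : K) ^ (i.val * l.val)) •
          superComm μ α β i (j + l) (β (β x)) (superComm μ α β j l (β y) (α z))
        + ((-1 : K) ^ (j.val * i.val)) •
          superComm μ α β j (l + i) (β (β y)) (superComm μ α β l i (β z) (α x))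
        + ((-1 : K) ^ (l.val * j.val)) •
          superComm μ α β l (i + j) (β (β z)) (superComm μ α β i j (β x) (α y)) = 0 := by
  have hs : ∀ a, α.symm (β (α a)) = β a := fun a => by rw [← hco, α.symm_apply_apply]
  have hsm : ∀ a b, α.symm (μ a b) = μ (α.symm a) (α.symm b) := fun a b => by
    rw [LinearEquiv.symm_apply_eq, hαm, α.apply_symm_apply, α.apply_symm_apply]
  have hQ : ∀ a b c, μ (α.symm (β (μ (β a) (α b)))) (α (β c))
      = μ (β (β a)) (μ (β b) (α c)) := fun a b c => by
    rw [hβm, hsm, hs, hco, ← hass, α.apply_symm_apply]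
  have key : ∀ (i j l : ZMod 2) (x y z : A),
      superComm μ α β i (j + l) (β (β x)) (superComm μ α β j l (β y) (α z))
      = μ (β (β x)) (μ (β y) (α z))
        - ((-1 : K) ^ (j.val * l.val)) • μ (β (β x)) (μ (β z) (α y))
        - ((-1 : K) ^ (i.val * (j + l).val)) • (μ (β (β y)) (μ (β z) (α x))
        - ((-1 : K) ^ (j.val * l.val)) • μ (β (β z)) (μ (β y) (α x))) := by
    intro i j l x y z
    simp only [superComm, hs, LinearEquiv.symm_apply_apply, map_sub, map_smul,
      LinearMap.sub_apply, LinearMap.smul_apply, hQ]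
  intro i j l x _ y _ z _
  rw [key, key, key]
  have h0 : (0 : ZMod 2).val = 0 := rfl
  have h1 : (1 : ZMod 2).val = 1 := rfl
  have h2 : (1 + 1 : ZMod 2) = 0 := rfl
  have hc : ∀ t : ZMod 2, t = 0 ∨ t = 1 := by decide
  rcases hc i with rfl | rfl <;> rcases hc j with rfl | rfl <;> rcases hc l with rfl | rfl <;>
    simp only [h0, h1, h2, add_zero, zero_add, mul_zero, zero_mul, mul_one, pow_zero, pow_one,
      one_smul, neg_smul] <;> abel
end

section
/- Let (V, μ, α, β) be a BiHom-superalgebra over a field k with α and β bijective, and let [x, y] = xy − (−1)^{|x||y|} (α⁻¹(β(y)))(α(β⁻¹(x))) be the associated supercommutator. Then for all homogeneous x, y, z ∈ V: (−1)^{|x||z|}[β²(x), [β(y), α(z)]] + (−1)^{|y||x|}[β²(y), [β(z), α(x)]] + (−1)^{|z||y|}[β²(z), [β(x), α(y)]] = (−1)^{|x||z|} as_{α,β}(α⁻¹β²(x), β(y), α(z)) + (−1)^{|x||y|} as_{α,β}(α⁻¹β²(y), β(z), α(x)) + (−1)^{|z||y|} as_{α,β}(α⁻¹β²(z), β(x),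 α(y)) − (−1)^{|x||z|+|z||y|} as_{α,β}(α⁻¹β²(x), β(z), α(y)) − (−1)^{|x||y|+|z||y|} as_{α,β}(α⁻¹β²(z), β(y), α(x)) − (−1)^{|x||y|+|z||x|} as_{α,β}(α⁻¹β²(y), β(x), α(z)). (Lemma 3.4) -/
/-- The `(α,β)`-associator `as_{α,β}(x, y, z) = α(x)(yz) − (xy)β(z)`. -/
noncomputable def biAssoc {K : Type*} [Field K] {A : Type*} [AddCommGroup A] [Module K A]
    (μ : A →ₗ[K] A →ₗ[K] A) (α β : A ≃ₗ[K] A) (x y z : A) : A :=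
  μ (α x) (μ y z) - μ (μ x y) (β z)

/-- **Lemma 3.4.** In a BiHom-superalgebra with bijective `α`, `β`, the cyclic
BiHom-superJacobi sum of the supercommutator equals the stated signed combination of
six `(α,β)`-associators, for all homogeneous `x`, `y`, `z`. -/
theorem jacobi_sum_eq_associator_sum
    (K : Type*) [Field K] (V : Type*) [AddCommGroup V] [Module K V]
    (𝒜 : ZMod 2 → Submodule K V) [DirectSum.Decomposition 𝒜]
    (μ : V →ₗ[K] V →ₗ[K] V) (α β : V ≃ₗ[K] V)
    (hμ : ∀ (i j : ZMod 2), ∀ x ∈ 𝒜 i, ∀ y ∈ 𝒜 j, μ x y ∈ 𝒜 (i + j))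
    (hαe : ∀ (i : ZMod 2), ∀ x ∈ 𝒜 i, α x ∈ 𝒜 i)
    (hβe : ∀ (i : ZMod 2), ∀ x ∈ 𝒜 i, β x ∈ 𝒜 i)
    (hco : ∀ a : V, α (β a) = β (α a))
    (hαm : ∀ a b : V, α (μ a b) = μ (α a) (α b))
    (hβm : ∀ a b : V, β (μ a b) = μ (β a) (β b)) :
    ∀ (i j l : ZMod 2), ∀ x ∈ 𝒜 i, ∀ y ∈ 𝒜 j, ∀ z ∈ 𝒜 l,
      ((-1 : K) ^ (i.val * l.val)) •
          superComm μ α β i (j + l) (β (β x)) (superComm μ α β j l (β y) (α z))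
        + ((-1 : K) ^ (j.val * i.val)) •
          superComm μ α β j (l + i) (β (β y)) (superComm μ α β l i (β z) (α x))
        + ((-1 : K) ^ (l.val * j.val)) •
          superComm μ α β l (i + j) (β (β z)) (superComm μ α β i j (β x) (α y))
      = ((-1 : K) ^ (i.val * l.val)) • biAssoc μ α β (α.symm (β (β x))) (β y) (α z)
        + ((-1 : K) ^ (i.val * j.val)) • biAssoc μ α β (α.symm (β (β y))) (β z) (α x)
        + ((-1 : K) ^ (l.val * j.val)) • biAssoc μ α β (α.symm (β (β z))) (β x) (α y)
        - ((-1 : K) ^ (i.val * l.val + l.val * j.val)) •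
            biAssoc μ α β (α.symm (β (β x))) (β z) (α y)
        - ((-1 : K) ^ (i.val * j.val + l.val * j.val)) •
            biAssoc μ α β (α.symm (β (β z))) (β y) (α x)
        - ((-1 : K) ^ (i.val * j.val + l.val * i.val)) •
            biAssoc μ α β (α.symm (β (β y))) (β x) (α z) := by
  intro i j l x _ y _ z _
  have h1 : ∀ a b : V, α.symm (μ a b) = μ (α.symm a) (α.symm b) := by
    intro a b
    apply α.injective
    simp [hαm]
  have h2 : ∀ a : V, α.symm (β (α a)) = β a := by
    intro a
    rw [← hco, LinearEquiv.symm_apply_apply]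
  have h3 : ∀ p q r : ZMod 2, ∀ a b c : V,
      superComm μ α β p (q + r) (β (β a)) (superComm μ α β q r (β b) (α c))
      = μ (β (β a)) (μ (β b) (α c))
        - ((-1 : K) ^ (q.val * r.val)) • μ (β (β a)) (μ (β c) (α b))
        - ((-1 : K) ^ (p.val * (q + r).val)) •
          (μ (μ (α.symm (β (β b))) (β c)) (β (α a))
            - ((-1 : K) ^ (q.val * r.val)) • μ (μ (α.symm (β (β c))) (β b)) (β (α a))) := by
    intro p q r a b c
    simp only [superComm, h2, LinearEquiv.symm_apply_apply, map_sub, map_smul, hβm, h1,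
      LinearMap.sub_apply, LinearMap.smul_apply, hco]
  rw [h3, h3, h3]
  simp only [biAssoc, LinearEquiv.apply_symm_apply]
  have e : ∀ p : ZMod 2, p = 0 ∨ p = 1 := by decide
  have v1 : (1 : ZMod 2).val = 1 := rfl
  have v2 : (2 : ZMod 2).val = 0 := rfl
  rcases e i with rfl | rfl <;> rcases e j with rfl | rfl <;> rcases e l with rfl | rfl <;>
    simp only [v1, v2, ZMod.val_zero, add_zero, zero_add, mul_zero, zero_mul, mul_one, pow_zero,
      pow_one, one_add_one_eq_two, neg_one_sq] <;> module
end

section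
/- Let (V, μ, α, β) be a BiHom-superalgebra over a field k with α and β bijective, and for homogeneous x, y, z set S(x, y, z) = (−1)^{|x||z|} as_{α,β}(α⁻¹β²(x), β(y), α(z)) + (−1)^{|y||x|} as_{α,β}(α⁻¹β²(y), β(z), α(x)) + (−1)^{|z||y|} as_{α,β}(α⁻¹β²(z), β(x), α(y)). Then V is a BiHom-Lie admissible superalgebra if and only if S(x, y, z) = (−1)^{|x||y|+|y||z|+|z||x|} S(x, z, y) for all homogeneous x, y, z ∈ V. (Proposition 3.5) -/
/-- `S(x, y, z) = (−1)^{|x||z|} as(α⁻¹β²(x), β(y), α(z)) + (−1)^{|y||x|} as(α⁻¹β²(y), β(z), α(x))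
 + (−1)^{|z||y|} as(α⁻¹β²(z), β(x), α(y))` for `x`, `y`, `z` of parities `i`, `j`, `l`. -/
noncomputable def Sfun {K : Type*} [Field K] {A : Type*} [AddCommGroup A] [Module K A]
    (μ : A →ₗ[K] A →ₗ[K] A) (α β : A ≃ₗ[K] A) (i j l : ZMod 2) (x y z : A) : A :=
  ((-1 : K) ^ (i.val * l.val)) • biAssoc μ α β (α.symm (β (β x))) (β y) (α z)
    + ((-1 : K) ^ (j.val * i.val)) • biAssoc μ α β (α.symm (β (β y))) (β z) (α x)
    + ((-1 : K) ^ (l.val * j.val)) • biAssoc μ α β (α.symm (β (β z))) (β x) (α y)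

/-- **Proposition 3.5.** A BiHom-superalgebra with bijective `α`, `β` is BiHom-Lie
admissible (the supercommutator satisfies the BiHom-superJacobi identity on homogeneous
elements) if and only if `S(x, y, z) = (−1)^{|x||y|+|y||z|+|z||x|} S(x, z, y)` for all
homogeneous `x`, `y`, `z`. -/
theorem bihomLie_admissible_iff_S_symmetry
    (K : Type*) [Field K] (V : Type*) [AddCommGroup V] [Module K V]
    (𝒜 : ZMod 2 → Submodule K V) [DirectSum.Decomposition 𝒜]
    (μ : V →ₗ[K] V →ₗ[K] V) (α β : V ≃ₗ[K] V)
    (hμ : ∀ (i j : ZMod 2), ∀ x ∈ 𝒜 i, ∀ y ∈ 𝒜 j, μ x y ∈ 𝒜 (i + j))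
    (hαe : ∀ (i : ZMod 2), ∀ x ∈ 𝒜 i, α x ∈ 𝒜 i)
    (hβe : ∀ (i : ZMod 2), ∀ x ∈ 𝒜 i, β x ∈ 𝒜 i)
    (hco : ∀ a : V, α (β a) = β (α a))
    (hαm : ∀ a b : V, α (μ a b) = μ (α a) (α b))
    (hβm : ∀ a b : V, β (μ a b) = μ (β a) (β b)) :
    (∀ (i j l : ZMod 2), ∀ x ∈ 𝒜 i, ∀ y ∈ 𝒜 j, ∀ z ∈ 𝒜 l,
      ((-1 : K) ^ (i.val * l.val)) •
          superComm μ α β i (j + l) (β (β x)) (superComm μ α β j l (β y) (α z))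
        + ((-1 : K) ^ (j.val * i.val)) •
          superComm μ α β j (l + i) (β (β y)) (superComm μ α β l i (β z) (α x))
        + ((-1 : K) ^ (l.val * j.val)) •
          superComm μ α β l (i + j) (β (β z)) (superComm μ α β i j (β x) (α y)) = 0)
    ↔ (∀ (i j l : ZMod 2), ∀ x ∈ 𝒜 i, ∀ y ∈ 𝒜 j, ∀ z ∈ 𝒜 l,
        Sfun μ α β i j l x y z
          = ((-1 : K) ^ (i.val * j.val + j.val * l.val + l.val * i.val)) •
              Sfun μ α β i l j x z y) := by
  have hs : ∀ a : V, α.symm (β (α a)) = β a := by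
    intro a; rw [← hco, LinearEquiv.symm_apply_apply]
  have hsm : ∀ a b : V, α.symm (μ a b) = μ (α.symm a) (α.symm b) := by
    intro a b
    apply α.injective
    simp [hαm]
  have key : ∀ (i j l : ZMod 2) (x y z : V),
      ((-1 : K) ^ (i.val * l.val)) •
          superComm μ α β i (j + l) (β (β x)) (superComm μ α β j l (β y) (α z))
        + ((-1 : K) ^ (j.val * i.val)) •
          superComm μ α β j (l + i) (β (β y)) (superComm μ α β l i (β z) (α x))
        + ((-1 : K) ^ (l.val * j.val)) •
          superComm μ α β l (i + j) (β (β z)) (superComm μ α β i j (β x) (α y))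
      = Sfun μ α β i j l x y z
          - ((-1 : K) ^ (i.val * j.val + j.val * l.val + l.val * i.val)) •
              Sfun μ α β i l j x z y := by
    intro i j l x y z
    have h11 : (1 + 1 : ZMod 2) = 0 := by decide
    have h2 : ∀ i : ZMod 2, i = 0 ∨ i = 1 := by decide
    have hv : (1 : ZMod 2).val = 1 := rfl
    simp only [superComm, Sfun, biAssoc, hs, LinearEquiv.symm_apply_apply,
      LinearEquiv.apply_symm_apply, map_sub, map_smul, hβm, hsm, hco,
      LinearMap.sub_apply, LinearMap.smul_apply]
    simp only [← hco, LinearEquiv.symm_apply_apply]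
    rcases h2 i with rfl | rfl <;> rcases h2 j with rfl | rfl <;> rcases h2 l with rfl | rfl <;>
      simp only [h11, hv, ZMod.val_zero, add_zero, zero_add, mul_zero, zero_mul, mul_one,
        pow_zero, pow_one, one_smul] <;> module
  simp only [key, sub_eq_zero]
end

section
/- Let (L, [·,·], α, β) be a BiHom-Lie superalgebra over a field k with α and β bijective, let k ≥ 0 be an integer, and let a ∈ L be a homogeneous element satisfying α(a) = a = β(a). Define ad_k(a) : L → L by ad_k(a)(x) = [a, β^k(x)]. Then ad_k(a) is a β^{k+1}-derivation of L of parity |a|; that is, ad_k(a) commutes with α and β and satisfies ad_k(a)[x, y] = [ad_k(a)(x), β^{k+1}(y)] + (−1)^{|x||a|}[β^{k+1}(x), ad_k(a)(y)] for all homogeneous x, y ∈ L. (Proposition 4.5) -/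
/-- `βpow βm t` is `βm ^ t` for `t ≥ 0` and the zero map for `t < 0`
(the convention `β^{−1} = 0`, `β⁰ = id`). -/
noncomputable def betaPow {K : Type*} [Field K] {L : Type*} [AddCommGroup L] [Module K L]
    (βm : L →ₗ[K] L) (t : ℤ) : L →ₗ[K] L :=
  if t < 0 then 0 else βm ^ t.toNat

/-- `D` is a `β^t`-derivation of parity `d` of the BiHom-Lie superalgebra
`(L, b, α, βm)` graded by `𝒜`: `D` commutes with `α` and `βm`, is homogeneous of
parity `d`, and satisfies
`D[x, y] = [D(x), β^t(y)] + (−1)^{|x||D|}[β^t(x), D(y)]` on homogeneous elements. -/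
noncomputable def IsBetaDeriv {K : Type*} [Field K] {L : Type*} [AddCommGroup L] [Module K L]
    (𝒜 : ZMod 2 → Submodule K L) (b : L →ₗ[K] L →ₗ[K] L)
    (α βm : L →ₗ[K] L) (t : ℤ) (d : ZMod 2) (D : L →ₗ[K] L) : Prop :=
  (∀ x : L, D (α x) = α (D x)) ∧ (∀ x : L, D (βm x) = βm (D x)) ∧
  (∀ i : ZMod 2, ∀ x ∈ 𝒜 i, D x ∈ 𝒜 (i + d)) ∧
  (∀ (i j : ZMod 2), ∀ x ∈ 𝒜 i, ∀ y ∈ 𝒜 j,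
    D (b x y) = b (D x) (betaPow βm t y)
      + ((-1 : K) ^ (i.val * d.val)) • b (betaPow βm t x) (D y))

/-- An even surjective map is surjective on each homogeneous component. -/
theorem even_surj_component {K : Type*} [Field K] {L : Type*} [AddCommGroup L] [Module K L]
    (𝒜 : ZMod 2 → Submodule K L) [DirectSum.Decomposition 𝒜] (f : L →ₗ[K] L)
    (hs : Function.Surjective f) (he : ∀ (i : ZMod 2), ∀ x ∈ 𝒜 i, f x ∈ 𝒜 i)
    (i : ZMod 2) (x : L) (hx : x ∈ 𝒜 i) : ∃ u ∈ 𝒜 i, f u = x := by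
  have key : ∀ u : L, (DirectSum.decompose 𝒜 (f u) i : L) = f (DirectSum.decompose 𝒜 u i : L) := by
    intro u
    induction u using DirectSum.Decomposition.inductionOn 𝒜 with
    | zero => simp
    | @homogeneous j m =>
      by_cases h : j = i
      · subst h
        rw [DirectSum.decompose_of_mem_same 𝒜 (he _ _ m.2), DirectSum.decompose_of_mem_same 𝒜 m.2]
      · rw [DirectSum.decompose_of_mem_ne 𝒜 (he _ _ m.2) h, DirectSum.decompose_of_mem_ne 𝒜 m.2 h,
          map_zero]
    | add a c ha hc =>
      simp only [map_add, DirectSum.decompose_add, DirectSum.add_apply, Submodule.coe_add, ha, hc]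
  obtain ⟨u, rfl⟩ := hs x
  exact ⟨_, (DirectSum.decompose 𝒜 u i).2, by
    rw [← key, DirectSum.decompose_of_mem_same 𝒜 hx]⟩

/-- **Proposition 4.5.** Let `(L, [·,·], α, β)` be a BiHom-Lie superalgebra with
bijective `α`, `β`, let `n ≥ 0` and let `a ∈ L` be homogeneous of parity `p` with
`α(a) = a = β(a)`.  Then `ad_n(a) : x ↦ [a, β^n(x)]` is a `β^{n+1}`-derivation of `L`
of parity `|a| = p` (the inner `β^{n+1}`-derivation). -/
theorem ad_is_inner_derivation
    (K : Type*) [Field K] (L : Type*) [AddCommGroup L] [Module K L]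
    (𝒜 : ZMod 2 → Submodule K L) [DirectSum.Decomposition 𝒜]
    (b : L →ₗ[K] L →ₗ[K] L) (α βm : L →ₗ[K] L)
    (hαbij : Function.Bijective α) (hβbij : Function.Bijective βm)
    (hb : ∀ (i j : ZMod 2), ∀ x ∈ 𝒜 i, ∀ y ∈ 𝒜 j, b x y ∈ 𝒜 (i + j))
    (hαe : ∀ (i : ZMod 2), ∀ x ∈ 𝒜 i, α x ∈ 𝒜 i)
    (hβe : ∀ (i : ZMod 2), ∀ x ∈ 𝒜 i, βm x ∈ 𝒜 i)
    (hco : ∀ x : L, α (βm x) = βm (α x))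
    (hαh : ∀ x y : L, α (b x y) = b (α x) (α y))
    (hβh : ∀ x y : L, βm (b x y) = b (βm x) (βm y))
    (hskew : ∀ (i j : ZMod 2), ∀ x ∈ 𝒜 i, ∀ y ∈ 𝒜 j,
      b (βm x) (α y) = -(((-1 : K) ^ (i.val * j.val)) • b (βm y) (α x)))
    (hjac : ∀ (i j l : ZMod 2), ∀ x ∈ 𝒜 i, ∀ y ∈ 𝒜 j, ∀ z ∈ 𝒜 l,
      ((-1 : K) ^ (i.val * l.val)) • b (βm (βm x)) (b (βm y) (α z))
        + ((-1 : K) ^ (j.val * i.val)) • b (βm (βm y)) (b (βm z) (α x))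
        + ((-1 : K) ^ (l.val * j.val)) • b (βm (βm z)) (b (βm x) (α y)) = 0)
    (n : ℕ) (p : ZMod 2) (a : L) (ha : a ∈ 𝒜 p)
    (hαa : α a = a) (hβa : βm a = a) :
    IsBetaDeriv 𝒜 b α βm ((n : ℤ) + 1) p ((b a) ∘ₗ betaPow βm (n : ℤ)) := by
  have hp : ∀ m : ℕ, betaPow βm (m : ℤ) = βm ^ m := by
    intro m
    simp [betaPow]
  have hp1 : betaPow βm ((n : ℤ) + 1) = βm ^ (n + 1) := by
    rw [← hp (n + 1)]; push_cast; rfl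
  have hpa : ∀ (m : ℕ) (x : L), (βm ^ m) (α x) = α ((βm ^ m) x) := by
    intro m x
    induction m with
    | zero => simp
    | succ m ih => rw [pow_succ', Module.End.mul_apply, Module.End.mul_apply, ih, hco]
  have hpe : ∀ (m : ℕ) (i : ZMod 2), ∀ x ∈ 𝒜 i, (βm ^ m) x ∈ 𝒜 i := by
    intro m i x hx
    induction m with
    | zero => simpa using hx
    | succ m ih => rw [pow_succ', Module.End.mul_apply]; exact hβe _ _ ih
  have hpb : ∀ (m : ℕ) (x y : L), (βm ^ m) (b x y) = b ((βm ^ m) x) ((βm ^ m) y) := by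
    intro m x y
    induction m with
    | zero => simp
    | succ m ih => simp only [pow_succ', Module.End.mul_apply, ih, hβh]
  have hpc : ∀ (m : ℕ) (x : L), (βm ^ m) (βm x) = βm ((βm ^ m) x) := by
    intro m x
    rw [← Module.End.mul_apply, ← Module.End.mul_apply, ← pow_succ, ← pow_succ']
  have core : ∀ (i j : ZMod 2), ∀ x ∈ 𝒜 i, ∀ y ∈ 𝒜 j,
      b a (b x y) = b (b a x) (βm y) + ((-1 : K) ^ (i.val * p.val)) • b (βm x) (b a y) := by
    intro i j x hx y hy
    obtain ⟨u, hu, rfl⟩ := even_surj_component 𝒜 βm hβbij.2 hβe i x hx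
    obtain ⟨v, hv, rfl⟩ := even_surj_component 𝒜 α hαbij.2 hαe j y hy
    have h1 := hjac p i j a ha u hu v hv
    have h2 := hskew j p v hv a ha
    have h3 := hskew j (p + i) (βm v) (hβe _ _ hv) (b a u) (hb _ _ _ ha _ hu)
    rw [hαh, hβh, hαa, hβa] at h3
    rw [hαa, hβa] at h2
    rw [hαa, hβa, hβa, h2, h3, hco] at h1
    rw [← hco] at h1 ⊢
    clear h2 h3
    generalize b a (b (βm u) (α v)) = A at *
    simp only [map_neg, map_smul] at h1
    generalize b (b a (βm u)) (α (βm v)) = B at *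
    generalize b (βm (βm u)) (b a (α v)) = C at *
    have e0 : ZMod.val (0 : ZMod 2) = 0 := rfl
    have e1 : ZMod.val (1 : ZMod 2) = 1 := rfl
    have e2 : (1 : ZMod 2) + 1 = 0 := rfl
    have hz : ∀ q : ZMod 2, q = 0 ∨ q = 1 := by decide
    rcases hz i with rfl | rfl <;> rcases hz j with rfl | rfl <;> rcases hz p with rfl | rfl <;>
      simp only [e0, e1, e2, add_zero, zero_add, mul_zero, zero_mul, mul_one, pow_zero, pow_one,
        one_smul, neg_smul, smul_neg, neg_neg] at h1 ⊢ <;>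
      first
        | linear_combination (norm := module) (1 : K) • h1
        | linear_combination (norm := module) (-1 : K) • h1
  refine ⟨?_, ?_, ?_, ?_⟩
  · intro x
    simp only [LinearMap.comp_apply, hp, hpa, hαh, hαa]
  · intro x
    simp only [LinearMap.comp_apply, hp, hpc, hβh, hβa]
  · intro i x hx
    rw [LinearMap.comp_apply, hp, add_comm]
    exact hb _ _ _ ha _ (hpe _ _ _ hx)
  · intro i j x hx y hy
    simp only [LinearMap.comp_apply, hp, hp1, hpb, pow_succ', Module.End.mul_apply]
    exact core i j _ (hpe _ _ _ hx) _ (hpe _ _ _ hy)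
end
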